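/- Suppose a monoid M satisfies x² ≈ x³, x²y ≈ xyx, and x²y² ≈ y²x² (the defining identities of the variety E). Let u ≈ v be an identity with sim(u) = sim(v), mul(u) = mul(v), all simple letters appearing in the same order in u and v, and such that for each letter x, the set of simple letters preceding the first occurrence of x is the same in u as in v (i.e., h₁⁰(u,x) = h₁⁰(v,x) for all x). Then M satisfies u ≈ v. -/

import Mathlib

/-- `s` occurs before the first occurrence of `y` (or anywhere, if `y` does not occur). -/
def Bef {X : Type*} (s y : X) : List X → Prop
  | [] => False
  | a :: w => a ≠ y ∧ (a = s ∨ Bef s y w)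

theorem bef_takeWhile {X : Type*} [DecidableEq X] (s y : X) (w : List X) :
    s ∈ w.takeWhile (fun a => decide (a ≠ y)) ↔ Bef s y w := by
  induction w with
  | nil => simp [Bef]
  | cons a w ih =>
    by_cases h : a = y
    · simp [Bef, List.takeWhile_cons, h]
    · simp only [ne_eq, decide_not] at ih
      simp [Bef, h, ih, eq_comm (a := s)]

theorem bef_mem {X : Type*} {s y : X} {w : List X} (h : Bef s y w) : s ∈ w := by
  induction w with
  | nil => exact h.elim
  | cons a w ih =>
    rcases h.2 with h | h
    · simp [h]
    · simp [ih h]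

theorem bef_filter {X : Type*} [DecidableEq X] {s y x : X} (hs : s ≠ x) (hy : y ≠ x)
    (w : List X) : Bef s y (w.filter (fun a => decide (a ≠ x))) ↔ Bef s y w := by
  induction w with
  | nil => simp
  | cons a w ih =>
    by_cases h : a = x
    · subst h
      rw [List.filter_cons_of_neg (by simp), ih]
      simp [Bef, hs.symm, hy.symm]
    · rw [List.filter_cons_of_pos (by simp [h])]
      simp only [Bef, ih]

theorem bef_insert {X : Type*} {s y x : X} (hs : s ≠ x) (hy : y ≠ x)
    (p q : List X) : Bef s y (p ++ x :: q) ↔ Bef s y (p ++ q) := by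
  induction p with
  | nil => simp [Bef, hs.symm, hy.symm]
  | cons a w ih => simp [Bef, ih]

theorem bef_prefix {X : Type*} {s x : X} {p q : List X} (hx : x ∉ p) (hs : s ∈ p) :
    Bef s x (p ++ x :: q) := by
  induction p with
  | nil => simp at hs
  | cons a w ih =>
    simp only [List.mem_cons, not_or] at hx hs
    refine ⟨fun h => hx.1 h.symm, ?_⟩
    rcases hs with h | h
    · exact Or.inl h.symm
    · exact Or.inr (ih hx.2 h)

theorem stage2 {X : Type*} {M : Type*} [Monoid M] (S : X → Prop) (g : X → M)
    (hg : ∀ x y, S x → S y → Commute (g x) (g y)) (a : List X) :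
    ∀ b : List X, a.Nodup → b.Nodup → (∀ x, x ∈ a ↔ x ∈ b) →
      (∀ y ∈ a, ∀ s, ¬ S s → (Bef s y a ↔ Bef s y b)) →
      (a.map g).prod = (b.map g).prod := by
  induction a with
  | nil =>
    intro b _ _ hm _
    have : b = [] := List.eq_nil_iff_forall_not_mem.2 (fun x hx => by simpa using (hm x).2 hx)
    simp [this]
  | cons x a ih =>
    intro b ha hb hm hbef
    obtain ⟨p, q, rfl⟩ := List.append_of_mem ((hm x).1 (by simp))
    have hb' := List.nodup_middle.1 hb
    have hxpq := (List.nodup_cons.1 hb').1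
    have hxp : x ∉ p := fun h => hxpq (by simp [h])
    have hxa := (List.nodup_cons.1 ha).1
    have hmS : ∀ s ∈ p, S s := by
      intro s hs
      by_contra hS
      have := (hbef x (by simp) s hS).2 (bef_prefix hxp hs)
      exact this.1 rfl
    have hcomm : Commute (g x) (p.map g).prod := by
      by_cases hS : S x
      · apply Commute.list_prod_right
        intro m hm'
        obtain ⟨s, hs, rfl⟩ := List.mem_map.1 hm'
        exact hg _ _ hS (hmS s hs)
      · have : p = [] := by
          cases p with
          | nil => rfl
          | cons z p =>
            exfalso
            have hzx : x ≠ z := fun h => hxp (by simp [h])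
            have := (hbef z ((hm z).2 (by simp)) x hS).1 ⟨hzx, Or.inl rfl⟩
            exact this.1 rfl
        simp [this]
    have key := ih (p ++ q) (List.nodup_cons.1 ha).2 (List.nodup_cons.1 hb').2 (by
      intro y
      by_cases hy : y = x
      · subst hy; exact ⟨fun h => (hxa h).elim, fun h => (hxpq h).elim⟩
      · have := hm y
        simpa [hy] using this) (by
      intro y hy s hS
      have hyx : y ≠ x := fun h => hxa (h ▸ hy)
      by_cases hs : s = x
      · subst hs
        exact ⟨fun h => (hxa (bef_mem h)).elim, fun h => (hxpq (bef_mem h)).elim⟩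
      · have := hbef y (by simp [hy]) s hS
        rw [bef_insert hs hyx] at this
        rw [← this]
        exact (bef_insert hs hyx [] a).symm)
    simp only [List.map_cons, List.prod_cons, List.map_append, List.prod_append] at key ⊢
    rw [key, ← mul_assoc, hcomm.eq, mul_assoc]

section
variable {X : Type*} [DecidableEq X] {M : Type*} [Monoid M]

theorem absorb (h1 : ∀ x : M, x ^ 2 = x ^ 3) (h2 : ∀ x y : M, x ^ 2 * y = x * y * x)
    (x y : M) : x ^ 2 * y * x = x ^ 2 * y := by
  have := h2 x (x * y)
  calc x ^ 2 * y * x = x * (x * y) * x := by rw [pow_two]; simp only [mul_assoc]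
    _ = x ^ 3 * y := by rw [← this, ← mul_assoc, ← pow_succ]
    _ = _ := by rw [← h1]

theorem absorb_list (h1 : ∀ x : M, x ^ 2 = x ^ 3) (h2 : ∀ x y : M, x ^ 2 * y = x * y * x)
    (f : X → M) (x : X) (w : List X) : ∀ m : M, f x ^ 2 * m * (w.map f).prod =
      f x ^ 2 * m * ((w.filter (fun a => decide (a ≠ x))).map f).prod := by
  induction w with
  | nil => simp
  | cons a w ih =>
    intro m
    by_cases h : a = x
    · subst h
      rw [List.filter_cons_of_neg (by simp), List.map_cons, List.prod_cons, ← mul_assoc,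
        absorb h1 h2, ih]
    · rw [List.filter_cons_of_pos (by simp [h]), List.map_cons, List.prod_cons,
        List.map_cons, List.prod_cons]
      have := ih (m * f a)
      simpa only [mul_assoc] using this

theorem stage1 (h1 : ∀ x : M, x ^ 2 = x ^ 3) (h2 : ∀ x y : M, x ^ 2 * y = x * y * x)
    (f g : X → M) (n : ℕ) : ∀ w : List X, w.length ≤ n →
    (∀ a ∈ w, g a = if w.count a = 1 then f a else f a ^ 2) →
    ∃ d : List X, d.Nodup ∧ (∀ x, x ∈ d ↔ x ∈ w) ∧ (∀ s y, Bef s y d ↔ Bef s y w) ∧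
      (w.map f).prod = (d.map g).prod := by
  induction n with
  | zero =>
    intro w hw _
    have : w = [] := List.length_eq_zero_iff.1 (by omega)
    subst this
    exact ⟨[], by simp⟩
  | succ n ih =>
    intro w hw hg
    cases w with
    | nil => exact ⟨[], by simp⟩
    | cons x w =>
      obtain ⟨d, hd, hm, hb, hp⟩ := ih (w.filter (fun a => decide (a ≠ x)))
        (by
          have := List.length_filter_le (fun a => decide (a ≠ x)) w
          simp only [List.length_cons] at hw
          omega)
        (by
          intro a ha
          have ha' := List.mem_filter.1 ha
          have hax : a ≠ x := by simpa using ha'.2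
          rw [hg a (by simp [ha'.1]), List.count_filter (by simpa using hax),
            List.count_cons_of_ne hax.symm])
      have hxd : x ∉ d := by rw [hm]; simp
      refine ⟨x :: d, List.nodup_cons.2 ⟨hxd, hd⟩, ?_, ?_, ?_⟩
      · intro y
        by_cases hy : y = x
        · simp [hy]
        · simp [hy, hm]
      · intro s y
        by_cases hy : y = x
        · simp [Bef, hy]
        by_cases hs : s = x
        · simp [Bef, hs]
        · simp only [Bef]
          rw [hb, bef_filter hs hy]
      · rw [List.map_cons, List.prod_cons, List.map_cons, List.prod_cons, ← hp,
          hg x (by simp)]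
        by_cases hx : x ∈ w
        · have hc : (x :: w).count x ≠ 1 := by
            have := List.count_pos_iff.2 hx
            rw [List.count_cons_self]; omega
          rw [if_neg hc]
          have e := absorb_list h1 h2 f x w 1
          rw [mul_one] at e
          rw [← e]
          obtain ⟨p, q, rfl⟩ := List.append_of_mem hx
          simp only [List.map_append, List.map_cons, List.prod_append, List.prod_cons]
          calc f x * ((p.map f).prod * (f x * (q.map f).prod))
              = f x * (p.map f).prod * f x * (q.map f).prod := by simp only [mul_assoc]
            _ = f x ^ 2 * (p.map f).prod * f x * (q.map f).prod := by
              rw [← h2, absorb h1 h2]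
            _ = _ := by simp only [mul_assoc]
        · have hc : (x :: w).count x = 1 := by
            rw [List.count_cons_self, List.count_eq_zero_of_not_mem hx]
          rw [if_pos hc, List.filter_eq_self.2]
          intro a ha
          have : a ≠ x := fun h => hx (h ▸ ha)
          simpa using this

end

/-- Sufficiency for the word problem of the variety E: a monoid satisfying
x² ≈ x³, x²y ≈ xyx, x²y² ≈ y²x² satisfies every identity u ≈ v such that
sim(u) = sim(v), mul(u) = mul(v), the simple letters appear in the same order in u
and v, and for every letter x the simple letters preceding the first occurrence of x
are the same in u and in v. -/
theorem stmt12 {X : Type*} [DecidableEq X] {M : Type*} [Monoid M]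
    (h1 : ∀ x : M, x ^ 2 = x ^ 3)
    (h2 : ∀ x y : M, x ^ 2 * y = x * y * x)
    (h3 : ∀ x y : M, x ^ 2 * y ^ 2 = y ^ 2 * x ^ 2)
    (u v : List X)
    (hsim : ∀ x : X, u.count x = 1 ↔ v.count x = 1)
    (hmul : ∀ x : X, 2 ≤ u.count x ↔ 2 ≤ v.count x)
    (horder : u.filter (fun a => decide (u.count a = 1)) =
      v.filter (fun a => decide (v.count a = 1)))
    (hrestr : ∀ x ∈ u,
      (u.takeWhile (fun a => decide (a ≠ x))).filter (fun a => decide (u.count a = 1)) =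
      (v.takeWhile (fun a => decide (a ≠ x))).filter (fun a => decide (v.count a = 1))) :
    ∀ f : X → M, (u.map f).prod = (v.map f).prod := by
  intro f
  have hmem : ∀ x, x ∈ u ↔ x ∈ v := by
    intro x
    rw [← List.count_pos_iff, ← List.count_pos_iff]
    have := hsim x
    have := hmul x
    omega
  obtain ⟨d, hd, hdm, hdb, hdp⟩ := stage1 h1 h2 f
    (fun a => if u.count a = 1 then f a else f a ^ 2) _ u le_rfl (fun a _ => rfl)
  obtain ⟨e, he, hem, heb, hep⟩ := stage1 h1 h2 f
    (fun a => if u.count a = 1 then f a else f a ^ 2) _ v le_rfl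
    (fun a _ => by simp only [hsim a])
  rw [hdp, hep]
  apply stage2 (fun a => u.count a ≠ 1) _ _ d e hd he
  · intro x; rw [hdm, hem, hmem]
  · intro y hy s hs
    have hs : u.count s = 1 := not_not.1 hs
    rw [hdb, heb, ← bef_takeWhile, ← bef_takeWhile]
    have h := hrestr y ((hdm y).1 hy)
    have h' := Iff.of_eq (congrArg (fun l => s ∈ l) h)
    simp only [List.mem_filter] at h'
    simpa [hs, (hsim s).1 hs] using h'
  · intro x y hx hy
    simp only [if_neg hx, if_neg hy]
    exact h3 _ _
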